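/- Let p ∈ (1,2) and let ν be a probability measure on 𝕋 with a density (still denoted ν) with respect to λ that is a-Hölder with constant A, i.e. |ν(x)−ν(y)| ≤ A d(x,y)^a for all x,y, where a ∈ (0,1] and A > 0. Then there exist constants σ ∈ (0,1/2) and C > 0, depending only on p and A, such that for every β ≥ 1 and every α ∈ (0, σ β^{−2}) there exists a bounded measurable function h : 𝕋 → ℝ with ∫_𝕋 L_{α,β}φ dμ_β = ∫_𝕋 φ·h dμ_β for all φ ∈ C²(𝕋), and with ess sup_x |h(x)| ≤ C·max(αβ⁴, α^{p−1}β^{1+p}, α^a β^{1+a}). -/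

import Mathlib

open MeasureTheory Real Set Filter

noncomputable section

instance : Fact (0 < 2 * π) := ⟨Real.two_pi_pos⟩

/-- The circle `𝕋 = ℝ/(2πℤ)`. -/
abbrev 𝕋 : Type := AddCircle (2 * π)

/-- The normalized Haar probability measure `λ` on the circle. -/
def lam : Measure 𝕋 := (ENNReal.ofReal (2 * π))⁻¹ • volume

/-- The representative of a point of the circle in `(-π, π]`. -/
def rep (z : 𝕋) : ℝ := ((AddCircle.equivIoc (2 * π) (-π) z : Set.Ioc (-π) (-π + 2 * π)) : ℝ)

/-- `σ(x,y) = +1` if the representative of `y - x` lies in `[0, π]`, `-1` otherwise. -/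
def sgn (x y : 𝕋) : ℝ := if 0 ≤ rep (y - x) then 1 else -1

/-- The potential `U_p(x) = ∫ d(x,y)^p ν(dy)`. -/
def Up (p : ℝ) (ν : Measure 𝕋) (x : 𝕋) : ℝ := ∫ y, dist x y ^ p ∂ν

/-- The normalizing constant `Z_β = ∫ exp(-β U_p) dλ`. -/
def Zp (p : ℝ) (ν : Measure 𝕋) (β : ℝ) : ℝ := ∫ x, Real.exp (-β * Up p ν x) ∂lam

/-- The Gibbs measure `μ_β` with density `exp(-β U_p)/Z_β` w.r.t. `λ`. -/
def gibbsp (p : ℝ) (ν : Measure 𝕋) (β : ℝ) : Measure 𝕋 :=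
  lam.withDensity fun x => ENNReal.ofReal (Real.exp (-β * Up p ν x) / Zp p ν β)

/-- The generator, acting on (the periodic lift) `φ` of a `C²` function on `𝕋`:
`L_{α,β}φ(x) = ½ φ''(x) + α⁻¹ ∫ [φ(x + (p/2)αβ d(x,y)^{p-1} σ(x,y)) - φ(x)] ν(dy)`. -/
def genp (p : ℝ) (ν : Measure 𝕋) (α β : ℝ) (φ : ℝ → ℝ) (z : 𝕋) : ℝ :=
  (1 / 2) * deriv (deriv φ) (rep z)
    + α⁻¹ * ∫ y, (φ (rep z + p / 2 * α * β * dist z y ^ (p - 1) * sgn z y) - φ (rep z)) ∂ν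

/-!
Integrating by parts in the diffusion part and translating the circle in the jump part, one finds
`h` explicitly: the diffusion contributes `½ (β² U'² - β U'')`, and the jumps an average of
`exp (-β (U (x - s) - U x)) G (y - s) - G y`, where `G` is the density of `ν` and `s` is the jump
performed at distance `y - x`. Expand the latter to first order in `s`. Although `G` is only Hölder,
so that `G (y - s) - G y` cannot be expanded pointwise, its average over `y` can: integrating by
parts against a primitive of `G` leaves boundary increments of that `C^{1,a}` function, together
with the integral of the derivative of `s` against `G`. The coefficient `p/2 · αβ`
of the jumps is such that the first order terms cancel the diffusion part exactly; what remains is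
of order `α⁻¹ ((αβ)^{1+a} + (αβ²)²) = α^a β^{1+a} + αβ⁴`.
-/

lemma abs_sub_le_of_abs_hasDerivAt_le {f f' : ℝ → ℝ} {L : ℝ} (hf : ∀ x, HasDerivAt f (f' x) x)
    (hL : ∀ x, |f' x| ≤ L) (x y : ℝ) : |f x - f y| ≤ L * |x - y| :=
  convex_univ.norm_image_sub_le_of_norm_hasDerivWithin_le
    (fun z _ ↦ (hf z).hasDerivWithinAt) (fun z _ ↦ hL z) (mem_univ y) (mem_univ x)

lemma abs_taylor_one_le_of_holder {f f' : ℝ → ℝ} {A a : ℝ} (hA : 0 ≤ A) (ha : 0 ≤ a)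
    (hf : ∀ x, HasDerivAt f (f' x) x) (hf' : ∀ x y, |f' x - f' y| ≤ A * |x - y| ^ a) (x t : ℝ) :
    |f (x + t) - f x - t * f' x| ≤ A * |t| ^ a * |t| := by
  have hslope : ∀ u ∈ uIcc x (x + t), |f' u - f' x| ≤ A * |t| ^ a := fun u hu ↦ by
    have hut : |u - x| ≤ |t| := by simpa using abs_sub_left_of_mem_uIcc hu
    exact (hf' u x).trans (by gcongr)
  have h := (convex_uIcc x (x + t)).norm_image_sub_le_of_norm_hasDerivWithin_le
    (f := fun u ↦ f u - u * f' x)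
    (fun u _ ↦ (((hf u).sub ((hasDerivAt_id u).mul_const (f' x))).congr_deriv
      (by rw [one_mul])).hasDerivWithinAt) hslope
    left_mem_uIcc right_mem_uIcc
  rw [norm_eq_abs, norm_eq_abs, add_sub_cancel_left] at h
  convert h using 2
  ring

lemma abs_exp_neg_mul_increment_sub_linear_le {V V' V'' : ℝ → ℝ} {L β x t : ℝ}
    (hV : ∀ x, HasDerivAt V (V' x) x) (hV' : ∀ x, HasDerivAt V' (V'' x) x)
    (hL : ∀ x, |V' x| ≤ L) (hL' : ∀ x, |V'' x| ≤ L) (hβ : 0 ≤ β) (ht : β * L * |t| ≤ 1) :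
    |exp (-β * (V (x - t) - V x)) - 1 - β * t * V' x| ≤ (β * L * |t|) ^ 2 + β * L * t ^ 2 := by
  have hL0 : 0 ≤ L := (abs_nonneg _).trans (hL 0)
  have hincr : |-β * (V (x - t) - V x)| ≤ β * L * |t| := by
    have h := abs_sub_le_of_abs_hasDerivAt_le hV hL (x - t) x
    rw [sub_sub_cancel_left, abs_neg] at h
    rw [abs_mul, abs_neg, abs_of_nonneg hβ, mul_assoc]
    gcongr
  have hexp : |exp (-β * (V (x - t) - V x)) - 1 - -β * (V (x - t) - V x)| ≤ (β * L * |t|) ^ 2 :=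
    (abs_exp_sub_one_sub_id_le (hincr.trans ht)).trans (sq_le_sq' (abs_le.1 hincr).1
      (abs_le.1 hincr).2)
  have htaylor : |-β * (V (x - t) - V x) - β * t * V' x| ≤ β * L * t ^ 2 := by
    have h := abs_taylor_one_le_of_holder hL0 zero_le_one hV
      (by simpa using abs_sub_le_of_abs_hasDerivAt_le hV' hL') x (-t)
    rw [rpow_one, abs_neg, mul_assoc, ← sq, sq_abs] at h
    calc |-β * (V (x - t) - V x) - β * t * V' x|
        = β * |V (x + -t) - V x - -t * V' x| := by
          rw [← abs_of_nonneg hβ, ← abs_mul, ← abs_neg, abs_of_nonneg hβ]; ring_nf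
      _ ≤ β * L * t ^ 2 := by rw [mul_assoc]; gcongr
  exact (abs_sub_le (exp (-β * (V (x - t) - V x)) - 1) _ _).trans (add_le_add hexp htaylor)

/-- The signed power `sign w * |w| ^ q`, written as `|w| ^ (q - 1) * w` to match the derivative of
`|w| ^ (q + 1)`. With `q = p - 1` it gives the direction and length of the jumps. -/
def signedRpow (q w : ℝ) : ℝ := |w| ^ (q - 1) * w

section SignedRpow

variable {q R : ℝ}

lemma signedRpow_neg (q w : ℝ) : signedRpow q (-w) = -signedRpow q w := by
  simp [signedRpow]

lemma signedRpow_of_nonneg (hq : q ≠ 0) {w : ℝ} (hw : 0 ≤ w) : signedRpow q w = w ^ q := by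
  rw [signedRpow, abs_of_nonneg hw, ← rpow_add_one' hw (by simpa using hq), sub_add_cancel]

lemma abs_signedRpow (hq : q ≠ 0) (w : ℝ) : |signedRpow q w| = |w| ^ q := by
  rw [← signedRpow_of_nonneg hq (abs_nonneg w), signedRpow, signedRpow, abs_mul, abs_abs,
    abs_of_nonneg (by positivity)]

lemma abs_signedRpow_le (hq : 0 < q) {w : ℝ} (hw : w ∈ Icc (-R) R) : |signedRpow q w| ≤ R ^ q := by
  rw [abs_signedRpow hq.ne']
  exact rpow_le_rpow (abs_nonneg w) (abs_le.2 hw) hq.le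

lemma hasDerivAt_abs_rpow_signedRpow {p : ℝ} (hp : 1 < p) (w : ℝ) :
    HasDerivAt (fun w : ℝ ↦ |w| ^ p) (p * signedRpow (p - 1) w) w := by
  convert hasDerivAt_abs_rpow w hp using 1
  rw [signedRpow, sub_sub, one_add_one_eq_two, mul_assoc]

lemma continuous_signedRpow (hq : 0 < q) : Continuous (signedRpow q) := by
  have hderiv : deriv (fun w : ℝ ↦ ‖w‖ ^ (q + 1)) = fun w ↦ (q + 1) * signedRpow q w := by
    ext w
    simpa using (hasDerivAt_abs_rpow_signedRpow (p := q + 1) (by linarith) w).deriv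
  have hcont := (contDiff_norm_rpow (E := ℝ) (p := q + 1) (by linarith)).continuous_deriv le_rfl
  rw [hderiv] at hcont
  refine (hcont.div_const (q + 1)).congr fun w ↦ ?_
  field_simp

lemma hasDerivAt_signedRpow (q : ℝ) {w : ℝ} (hw : w ≠ 0) :
    HasDerivAt (signedRpow q) (q * |w| ^ (q - 1)) w := by
  have h := ((hasDerivAt_abs hw).rpow_const (p := q - 1) (.inl (abs_ne_zero.2 hw))).mul
    (hasDerivAt_id w)
  refine h.congr_deriv ?_
  rw [rpow_sub_one (abs_ne_zero.2 hw) (q - 1), id]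
  have hsign : (SignType.sign w : ℝ) * w = |w| := sign_mul_self w
  field_simp
  linear_combination (q - 1) * hsign

lemma intervalIntegrable_abs_rpow {r : ℝ} (hr : -1 < r) (a b : ℝ) :
    IntervalIntegrable (fun w : ℝ ↦ |w| ^ r) volume a b := by
  have hpos : ∀ c, 0 ≤ c → IntervalIntegrable (fun w : ℝ ↦ |w| ^ r) volume 0 c := fun c hc ↦
    (intervalIntegral.intervalIntegrable_rpow' hr).congr fun w hw ↦ by
      rw [uIoc_of_le hc] at hw
      simp only [abs_of_pos hw.1]
  have hzero : ∀ c, IntervalIntegrable (fun w : ℝ ↦ |w| ^ r) volume 0 c := fun c ↦ by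
    rcases le_total 0 c with hc | hc
    · exact hpos c hc
    · rw [IntervalIntegrable.iff_comp_neg]
      simpa using hpos (-c) (neg_nonneg.2 hc)
  exact (hzero a).symm.trans (hzero b)

lemma intervalIntegrable_deriv_signedRpow (hq : 0 < q) (a b : ℝ) :
    IntervalIntegrable (fun w ↦ q * |w| ^ (q - 1)) volume a b :=
  (intervalIntegrable_abs_rpow (by linarith) a b).const_mul q

lemma integral_deriv_signedRpow (hq : 0 < q) (hR : 0 ≤ R) :
    ∫ w in (-R)..R, q * |w| ^ (q - 1) = 2 * R ^ q := by
  rw [integral_eq_of_hasDerivAt_off_countable (signedRpow q) _ (countable_singleton 0)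
    (continuous_signedRpow hq).continuousOn (fun w hw ↦ hasDerivAt_signedRpow q hw.2)
    (intervalIntegrable_deriv_signedRpow hq _ _), signedRpow_neg, signedRpow_of_nonneg hq.ne' hR]
  ring

lemma abs_integral_le_of_abs_le_const {f : ℝ → ℝ} {c : ℝ} (hR : 0 ≤ R)
    (hf : ∀ w ∈ Icc (-R) R, |f w| ≤ c) : |∫ w in (-R)..R, f w| ≤ 2 * R * c := by
  have h := intervalIntegral.norm_integral_le_of_norm_le_const (f := f) (a := -R) (b := R)
    fun w hw ↦ hf w (Ioc_subset_Icc_self (by rwa [uIoc_of_le (by linarith)] at hw))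
  rwa [sub_neg_eq_add, ← two_mul, abs_of_nonneg (by linarith), mul_comm] at h

lemma abs_integral_deriv_signedRpow_mul_le {f : ℝ → ℝ} {c : ℝ} (hq : 0 < q) (hR : 0 ≤ R)
    (hf : ∀ w ∈ Icc (-R) R, |f w| ≤ c) :
    |∫ w in (-R)..R, q * |w| ^ (q - 1) * f w| ≤ 2 * R ^ q * c := by
  rw [← integral_deriv_signedRpow hq hR, ← intervalIntegral.integral_mul_const]
  refine intervalIntegral.norm_integral_le_of_norm_le (E := ℝ) (by linarith)
    (.of_forall fun w hw ↦ ?_) ((intervalIntegrable_deriv_signedRpow hq _ _).mul_const c)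
  have hk : 0 ≤ q * |w| ^ (q - 1) := by positivity
  rw [norm_mul, norm_of_nonneg hk]
  exact mul_le_mul_of_nonneg_left (hf w (Ioc_subset_Icc_self hw)) hk

end SignedRpow

section DisplacedIntegral

variable {G K K' s s' : ℝ → ℝ} {a b : ℝ} {S : Set ℝ}

lemma integral_mul_comp_add_sub {P : ℝ → ℝ} (hG : Continuous G)
    (hP : ∀ x, HasDerivAt P (G x) x) (hS : S.Countable)
    (hK : Continuous K) (hK' : ∀ w ∉ S, HasDerivAt K (K' w) w)
    (hK'i : IntervalIntegrable K' volume a b)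
    (hs : Continuous s) (hs' : ∀ w ∉ S, HasDerivAt s (s' w) w)
    (hs'i : IntervalIntegrable s' volume a b) (x : ℝ) :
    ∫ w in a..b, K w * G (x + w - s w)
      = K b * P (x + b - s b) - K a * P (x + a - s a) - (∫ w in a..b, K' w * P (x + w - s w))
        + ∫ w in a..b, s' w * (K w * G (x + w - s w)) := by
  have hPc : Continuous P := continuous_iff_continuousAt.2 fun x ↦ (hP x).continuousAt
  have hGw : Continuous fun w ↦ K w * G (x + w - s w) := by fun_prop
  have hPw : Continuous fun w ↦ P (x + w - s w) := by fun_prop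
  have hi₁ := hGw.intervalIntegrable (μ := volume) a b
  have hi₂ := hK'i.mul_continuousOn hPw.continuousOn
  have hi₃ := hs'i.mul_continuousOn hGw.continuousOn
  have hderiv : ∀ w ∉ S, HasDerivAt (fun w ↦ K w * P (x + w - s w))
      (K w * G (x + w - s w) + K' w * P (x + w - s w) - s' w * (K w * G (x + w - s w))) w :=
    fun w hw ↦ by
      have hdisp : HasDerivAt (fun w ↦ x + w - s w) (1 - s' w) w :=
        ((hasDerivAt_id w).const_add x).sub (hs' w hw)
      refine ((hK' w hw).mul ((hP _).comp w hdisp)).congr_deriv ?_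
      simp only [Function.comp_apply]
      ring
  have hftc := integral_eq_of_hasDerivAt_off_countable (fun w ↦ K w * P (x + w - s w)) _ hS
    (hK.mul hPw).continuousOn (fun w hw ↦ hderiv w hw.2) ((hi₁.add hi₂).sub hi₃)
  rw [intervalIntegral.integral_sub (hi₁.add hi₂) hi₃, intervalIntegral.integral_add hi₁ hi₂]
    at hftc
  linear_combination hftc

lemma integral_mul_comp_add_sub_sub {P : ℝ → ℝ} (hG : Continuous G)
    (hP : ∀ x, HasDerivAt P (G x) x) (hS : S.Countable)
    (hK : Continuous K) (hK' : ∀ w ∉ S, HasDerivAt K (K' w) w)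
    (hK'i : IntervalIntegrable K' volume a b)
    (hs : Continuous s) (hs' : ∀ w ∉ S, HasDerivAt s (s' w) w)
    (hs'i : IntervalIntegrable s' volume a b) (x : ℝ) :
    ∫ w in a..b, K w * (G (x + w - s w) - G (x + w))
      = K b * (P (x + b - s b) - P (x + b)) - K a * (P (x + a - s a) - P (x + a))
        - (∫ w in a..b, K' w * (P (x + w - s w) - P (x + w)))
        + ∫ w in a..b, s' w * (K w * G (x + w - s w)) := by
  have hPc : Continuous P := continuous_iff_continuousAt.2 fun x ↦ (hP x).continuousAt
  have hdisp := integral_mul_comp_add_sub hG hP hS hK hK' hK'i hs hs' hs'i x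
  have hundisp := integral_mul_comp_add_sub (s := 0) (s' := 0) hG hP hS hK hK' hK'i
    continuous_zero (fun w _ ↦ hasDerivAt_const w 0) .zero x
  simp only [Pi.zero_apply, sub_zero, zero_mul, intervalIntegral.integral_zero, add_zero]
    at hundisp
  simp only [mul_sub]
  rw [intervalIntegral.integral_sub (Continuous.intervalIntegrable (by fun_prop) _ _)
      (Continuous.intervalIntegrable (by fun_prop) _ _),
    intervalIntegral.integral_sub (hK'i.mul_continuousOn (by fun_prop))
      (hK'i.mul_continuousOn (by fun_prop)), hdisp, hundisp]
  ring

lemma exists_forall_ball_abs_comp_add_le (hG : Continuous G) (a b x₀ : ℝ) :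
    ∃ C, ∀ x ∈ Metric.ball x₀ 1, ∀ w ∈ uIoc a b, |G (x + w)| ≤ C := by
  obtain ⟨C, hC⟩ := ((isCompact_closedBall x₀ 1).prod isCompact_uIcc
    (s := Metric.closedBall x₀ 1) (t := uIcc a b)).exists_bound_of_continuousOn
    (f := fun z : ℝ × ℝ ↦ G (z.1 + z.2)) (by fun_prop)
  exact ⟨C, fun x hx w hw ↦
    hC (x, w) ⟨Metric.ball_subset_closedBall hx, uIoc_subset_uIcc hw⟩⟩

lemma continuous_integral_mul_comp_add {k : ℝ → ℝ} (hG : Continuous G)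
    (hk : IntervalIntegrable k volume a b) :
    Continuous fun x ↦ ∫ w in a..b, k w * G (x + w) := by
  refine continuous_iff_continuousAt.2 fun x₀ ↦ ?_
  obtain ⟨C, hC⟩ := exists_forall_ball_abs_comp_add_le hG a b x₀
  refine intervalIntegral.continuousAt_of_dominated_interval (bound := fun w ↦ |k w| * C)
    (.of_forall fun x ↦ (hk.mul_continuousOn (by fun_prop)).aestronglyMeasurable_restrict_uIoc)
    ?_ (hk.abs.mul_const C) (.of_forall fun w _ ↦ by fun_prop)
  filter_upwards [Metric.ball_mem_nhds x₀ one_pos] with x hx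
  refine .of_forall fun w hw ↦ ?_
  rw [norm_mul]
  exact mul_le_mul_of_nonneg_left (hC x hx w hw) (abs_nonneg _)

lemma hasDerivAt_integral_mul_comp_add_of_hasDerivAt {k P : ℝ → ℝ} (hG : Continuous G)
    (hP : ∀ x, HasDerivAt P (G x) x) (hk : IntervalIntegrable k volume a b) (x₀ : ℝ) :
    HasDerivAt (fun x ↦ ∫ w in a..b, k w * P (x + w)) (∫ w in a..b, k w * G (x₀ + w)) x₀ := by
  have hPc : Continuous P := continuous_iff_continuousAt.2 fun x ↦ (hP x).continuousAt
  obtain ⟨C, hC⟩ := exists_forall_ball_abs_comp_add_le hG a b x₀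
  have hi : ∀ F : ℝ → ℝ, Continuous F → ∀ x,
      IntervalIntegrable (fun w ↦ k w * F (x + w)) volume a b := fun F hF x ↦
    hk.mul_continuousOn (by fun_prop)
  refine (intervalIntegral.hasDerivAt_integral_of_dominated_loc_of_deriv_le
    (bound := fun w ↦ |k w| * C) (Metric.ball_mem_nhds x₀ one_pos)
    (.of_forall fun x ↦ (hi P hPc x).aestronglyMeasurable_restrict_uIoc) (hi P hPc x₀)
    (hi G hG x₀).aestronglyMeasurable_restrict_uIoc (.of_forall fun w hw x hx ↦ ?_)
    (hk.abs.mul_const C)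
    (.of_forall fun w _ x _ ↦ ((hP (x + w)).comp_add_const x w).const_mul (k w))).2
  rw [norm_mul]
  exact mul_le_mul_of_nonneg_left (hC x hx w hw) (abs_nonneg _)

-- `G` need not be differentiable: the derivative falls on the kernel `K`.
lemma hasDerivAt_integral_kernel_mul_comp_add (hG : Continuous G) (hS : S.Countable)
    (hK : Continuous K) (hK' : ∀ w ∉ S, HasDerivAt K (K' w) w)
    (hK'i : IntervalIntegrable K' volume a b) (x : ℝ) :
    HasDerivAt (fun x ↦ ∫ w in a..b, K w * G (x + w))
      (K b * G (x + b) - K a * G (x + a) - ∫ w in a..b, K' w * G (x + w)) x := by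
  have hP : ∀ x, HasDerivAt (fun x ↦ ∫ t in (0 : ℝ)..x, G t) (G x) x := fun x ↦
    (hG.integral_hasStrictDerivAt 0 x).hasDerivAt
  have hparts : ∀ x, ∫ w in a..b, K w * G (x + w) = _ := fun x ↦ by
    simpa only [Pi.zero_apply, sub_zero, zero_mul, intervalIntegral.integral_zero, add_zero]
      using integral_mul_comp_add_sub (s := 0) (s' := 0) hG hP hS hK hK' hK'i
        continuous_zero (fun w _ ↦ hasDerivAt_const w 0) .zero x
  simp only [hparts]
  exact ((((hP _).comp_add_const x b).const_mul _).sub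
    (((hP _).comp_add_const x a).const_mul _)).sub
    (hasDerivAt_integral_mul_comp_add_of_hasDerivAt hG hP hK'i x)

end DisplacedIntegral

section SignedRpowDisplacement

variable {G : ℝ → ℝ} {q R e : ℝ}

lemma abs_mul_signedRpow_le (hq : 0 < q) (he : 0 ≤ e) {w : ℝ} (hw : w ∈ Icc (-R) R) :
    |e * signedRpow q w| ≤ e * R ^ q := by
  rw [abs_mul, abs_of_nonneg he]
  exact mul_le_mul_of_nonneg_left (abs_signedRpow_le hq hw) he

lemma integral_mul_comp_add_sub_signedRpow_sub {K K' P : ℝ → ℝ} (hG : Continuous G)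
    (hP : ∀ x, HasDerivAt P (G x) x) (hq : 0 < q) (hR : 0 ≤ R) (hK : Continuous K)
    (hK' : ∀ w ≠ 0, HasDerivAt K (K' w) w) (hK'i : IntervalIntegrable K' volume (-R) R)
    (e x : ℝ) :
    ∫ w in (-R)..R, K w * (G (x + w - e * signedRpow q w) - G (x + w))
      = K R * (P (x + R - e * R ^ q) - P (x + R)) - K (-R) * (P (x - R + e * R ^ q) - P (x - R))
        - (∫ w in (-R)..R, K' w * (P (x + w - e * signedRpow q w) - P (x + w)))
        + e * ∫ w in (-R)..R, q * |w| ^ (q - 1) * (K w * G (x + w - e * signedRpow q w)) := by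
  have hs : Continuous fun w ↦ e * signedRpow q w := (continuous_signedRpow hq).const_mul e
  rw [integral_mul_comp_add_sub_sub hG hP (countable_singleton 0) hK hK' hK'i hs
    (fun w hw ↦ (hasDerivAt_signedRpow q hw).const_mul e)
    ((intervalIntegrable_deriv_signedRpow hq _ _).const_mul e), signedRpow_neg,
    signedRpow_of_nonneg hq.ne' hR, ← intervalIntegral.integral_const_mul]
  simp only [mul_neg, sub_neg_eq_add, ← sub_eq_add_neg, mul_assoc]

lemma abs_integral_deriv_signedRpow_mul_comp_add_sub_le {A a : ℝ} (hG : Continuous G)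
    (hA : 0 ≤ A) (ha : 0 ≤ a) (hGA : ∀ x y, |G x - G y| ≤ A * |x - y| ^ a) (hq : 0 < q)
    (hR : 0 ≤ R) (he : 0 ≤ e) (x : ℝ) :
    |(∫ w in (-R)..R, q * |w| ^ (q - 1) * G (x + w - e * signedRpow q w))
        - ∫ w in (-R)..R, q * |w| ^ (q - 1) * G (x + w)|
      ≤ 2 * R ^ q * (A * (e * R ^ q) ^ a) := by
  have hs := continuous_signedRpow hq
  have hk := intervalIntegrable_deriv_signedRpow hq (-R) R
  rw [← intervalIntegral.integral_sub (hk.mul_continuousOn (by fun_prop))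
    (hk.mul_continuousOn (by fun_prop))]
  simp only [← mul_sub]
  refine abs_integral_deriv_signedRpow_mul_le hq hR fun w hw ↦ (hGA _ _).trans ?_
  rw [sub_sub_cancel_left, abs_neg]
  gcongr
  exact abs_mul_signedRpow_le hq he hw

lemma abs_integral_comp_add_sub_signedRpow_sub_linear_le {A a : ℝ} (hG : Continuous G)
    (hA : 0 ≤ A) (ha : 0 ≤ a) (hGA : ∀ x y, |G x - G y| ≤ A * |x - y| ^ a) (hq : 0 < q)
    (hR : 0 ≤ R) (he : 0 ≤ e) (x : ℝ) :
    |(∫ w in (-R)..R, (G (x + w - e * signedRpow q w) - G (x + w)))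
        - e * ((∫ w in (-R)..R, q * |w| ^ (q - 1) * G (x + w))
          - R ^ q * (G (x + R) + G (x - R)))|
      ≤ 4 * (A * (e * R ^ q) ^ a * (e * R ^ q)) := by
  set P := fun x ↦ ∫ t in (0 : ℝ)..x, G t
  have hP : ∀ x, HasDerivAt P (G x) x := fun x ↦ (hG.integral_hasStrictDerivAt 0 x).hasDerivAt
  have hδ : 0 ≤ e * R ^ q := by positivity
  have hparts := integral_mul_comp_add_sub_signedRpow_sub (K := 1) (K' := 0) hG hP hq hR
    continuous_one (fun w _ ↦ hasDerivAt_const w 1) .zero e x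
  simp only [Pi.one_apply, Pi.zero_apply, one_mul, zero_mul, intervalIntegral.integral_zero]
    at hparts
  have hkernel := abs_integral_deriv_signedRpow_mul_comp_add_sub_le hG hA ha hGA hq hR he x
  have hright := abs_taylor_one_le_of_holder hA ha hP hGA (x + R) (-(e * R ^ q))
  have hleft := abs_taylor_one_le_of_holder hA ha hP hGA (x - R) (e * R ^ q)
  rw [abs_neg] at hright
  rw [abs_of_nonneg hδ] at hright hleft
  rw [← sub_eq_add_neg] at hright
  have hkernel' := mul_le_mul_of_nonneg_left hkernel he
  rw [← abs_of_nonneg he, ← abs_mul, abs_of_nonneg he] at hkernel'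
  rw [hparts]
  rw [abs_le] at hright hleft hkernel' ⊢
  constructor <;> linarith

lemma abs_integral_signedRpow_mul_comp_add_sub_signedRpow_sub_le {M : ℝ} (hG : Continuous G)
    (hM : ∀ x, |G x| ≤ M) (hq : 0 < q) (hR : 0 ≤ R) (he : 0 ≤ e) (x : ℝ) :
    |∫ w in (-R)..R, signedRpow q w * (G (x + w - e * signedRpow q w) - G (x + w))|
      ≤ 6 * M * e * (R ^ q) ^ 2 := by
  set P := fun x ↦ ∫ t in (0 : ℝ)..x, G t
  have hP : ∀ x, HasDerivAt P (G x) x := fun x ↦ (hG.integral_hasStrictDerivAt 0 x).hasDerivAt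
  have hr : 0 ≤ R ^ q := by positivity
  have hM0 : 0 ≤ M := (abs_nonneg _).trans (hM 0)
  have hincr := abs_sub_le_of_abs_hasDerivAt_le hP hM
  have hparts := integral_mul_comp_add_sub_signedRpow_sub hG hP hq hR (continuous_signedRpow hq)
    (fun w hw ↦ hasDerivAt_signedRpow q hw) (intervalIntegrable_deriv_signedRpow hq _ _) e x
  have hprimitive := abs_integral_deriv_signedRpow_mul_le hq hR
    (f := fun w ↦ P (x + w - e * signedRpow q w) - P (x + w)) (c := M * (e * R ^ q))
    fun w hw ↦ (hincr _ _).trans (by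
      rw [sub_sub_cancel_left, abs_neg]
      gcongr
      exact abs_mul_signedRpow_le hq he hw)
  have hdensity := abs_integral_deriv_signedRpow_mul_le hq hR
    (f := fun w ↦ signedRpow q w * G (x + w - e * signedRpow q w)) (c := R ^ q * M)
    fun w hw ↦ by
      rw [abs_mul]
      exact mul_le_mul (abs_signedRpow_le hq hw) (hM _) (abs_nonneg _) hr
  have hboundary : ∀ y t, |t| = e * R ^ q →
      |R ^ q * (P (y + t) - P y)| ≤ R ^ q * (M * (e * R ^ q)) := fun y t ht ↦ by
    have h := hincr (y + t) y
    rw [add_sub_cancel_left, ht] at h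
    rw [abs_mul, abs_of_nonneg hr]
    gcongr
  have hright := hboundary (x + R) (-(e * R ^ q)) (by rw [abs_neg, abs_of_nonneg (by positivity)])
  have hleft := hboundary (x - R) (e * R ^ q) (abs_of_nonneg (by positivity))
  have hdensity' := mul_le_mul_of_nonneg_left hdensity he
  rw [← abs_of_nonneg he, ← abs_mul, abs_of_nonneg he] at hdensity'
  rw [hparts, signedRpow_neg, signedRpow_of_nonneg hq.ne' hR]
  rw [← sub_eq_add_neg] at hright
  rw [abs_le] at hright hleft hprimitive hdensity' ⊢
  constructor <;> linarith

end SignedRpowDisplacement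

/-- The lift to the line of the potential `U_p` of the measure on the circle whose density lifts to
the `2π`-periodic function `G`; the variable of integration is the displacement `y - x`. -/
def linePotential (p : ℝ) (G : ℝ → ℝ) (x : ℝ) : ℝ :=
  (2 * π)⁻¹ * ∫ w in (-π)..π, |w| ^ p * G (x + w)

/-- The derivative of `linePotential p G`. -/
def linePotentialDeriv (p : ℝ) (G : ℝ → ℝ) (x : ℝ) : ℝ :=
  -((2 * π)⁻¹ * (p * ∫ w in (-π)..π, signedRpow (p - 1) w * G (x + w)))

/-- The second derivative of `linePotential p G`; the boundary term comes from the jump of the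
derivative of `d(x, ·)^p` at the antipode of `x`. -/
def linePotentialDeriv₂ (p : ℝ) (G : ℝ → ℝ) (x : ℝ) : ℝ :=
  (2 * π)⁻¹ * (p * ((∫ w in (-π)..π, (p - 1) * |w| ^ (p - 1 - 1) * G (x + w))
    - π ^ (p - 1) * (G (x + π) + G (x - π))))

section LinePotential

variable {p M : ℝ} {G : ℝ → ℝ}

lemma periodic_linePotential (hper : Function.Periodic G (2 * π)) (p : ℝ) :
    Function.Periodic (linePotential p G) (2 * π) := fun x ↦ by
  simp only [linePotential, add_right_comm x (2 * π), hper _]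

lemma periodic_linePotentialDeriv (hper : Function.Periodic G (2 * π)) (p : ℝ) :
    Function.Periodic (linePotentialDeriv p G) (2 * π) := fun x ↦ by
  simp only [linePotentialDeriv, add_right_comm x (2 * π), hper _]

lemma hasDerivAt_linePotential (hG : Continuous G) (hper : Function.Periodic G (2 * π))
    (hp : 1 < p) (x : ℝ) :
    HasDerivAt (linePotential p G) (linePotentialDeriv p G x) x := by
  have hk : Continuous fun w ↦ p * signedRpow (p - 1) w :=
    (continuous_signedRpow (sub_pos.2 hp)).const_mul p
  have hderiv := hasDerivAt_integral_kernel_mul_comp_add (K := fun w : ℝ ↦ |w| ^ p) hG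
    countable_empty (continuous_abs.rpow_const fun _ ↦ .inr (by linarith))
    (fun w _ ↦ hasDerivAt_abs_rpow_signedRpow hp w) (hk.intervalIntegrable (-π) π) x
  have hantipode : G (x + π) = G (x + -π) := by rw [← hper (x + -π)]; ring_nf
  refine (hderiv.const_mul (2 * π)⁻¹).congr_deriv ?_
  simp only [linePotentialDeriv, mul_assoc, intervalIntegral.integral_const_mul]
  rw [abs_neg, hantipode]
  ring

lemma hasDerivAt_linePotentialDeriv (hG : Continuous G) (hp : 1 < p) (x : ℝ) :
    HasDerivAt (linePotentialDeriv p G) (linePotentialDeriv₂ p G x) x := by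
  have hq : 0 < p - 1 := sub_pos.2 hp
  have hderiv := hasDerivAt_integral_kernel_mul_comp_add hG (countable_singleton 0)
    (continuous_signedRpow hq) (fun w hw ↦ hasDerivAt_signedRpow _ hw)
    (intervalIntegrable_deriv_signedRpow hq (-π) π) x
  refine ((hderiv.const_mul p).const_mul (2 * π)⁻¹).neg.congr_deriv ?_
  rw [signedRpow_neg, signedRpow_of_nonneg hq.ne' pi_pos.le, linePotentialDeriv₂]
  ring_nf

lemma continuous_linePotential (hG : Continuous G) (hper : Function.Periodic G (2 * π))
    (hp : 1 < p) : Continuous (linePotential p G) :=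
  continuous_iff_continuousAt.2 fun x ↦ (hasDerivAt_linePotential hG hper hp x).continuousAt

lemma continuous_linePotentialDeriv (hG : Continuous G) (hp : 1 < p) :
    Continuous (linePotentialDeriv p G) :=
  continuous_iff_continuousAt.2 fun x ↦ (hasDerivAt_linePotentialDeriv hG hp x).continuousAt

lemma continuous_linePotentialDeriv₂ (hG : Continuous G) (hp : 1 < p) :
    Continuous (linePotentialDeriv₂ p G) := by
  have hint := continuous_integral_mul_comp_add hG
    (intervalIntegrable_deriv_signedRpow (sub_pos.2 hp) (-π) π)
  unfold linePotentialDeriv₂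
  fun_prop

lemma abs_linePotentialDeriv_le (hp : 1 < p) (hM : ∀ x, |G x| ≤ M) (x : ℝ) :
    |linePotentialDeriv p G x| ≤ p * π ^ (p - 1) * M := by
  have hint := abs_integral_le_of_abs_le_const (f := fun w ↦ signedRpow (p - 1) w * G (x + w))
    (c := π ^ (p - 1) * M) pi_pos.le fun w hw ↦ by
      rw [abs_mul]
      exact mul_le_mul (abs_signedRpow_le (sub_pos.2 hp) hw) (hM _) (abs_nonneg _) (by positivity)
  rw [linePotentialDeriv, abs_neg, abs_mul, abs_mul, abs_of_pos (by positivity : 0 < (2 * π)⁻¹),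
    abs_of_pos (by linarith : 0 < p), inv_mul_le_iff₀ (by positivity)]
  calc p * |∫ w in (-π)..π, signedRpow (p - 1) w * G (x + w)|
      ≤ p * (2 * π * (π ^ (p - 1) * M)) := by gcongr
    _ = 2 * π * (p * π ^ (p - 1) * M) := by ring

lemma abs_linePotentialDeriv₂_le (hp : 1 < p) (hM : ∀ x, |G x| ≤ M) (x : ℝ) :
    |linePotentialDeriv₂ p G x| ≤ p * π ^ (p - 1) * M := by
  have hM0 : 0 ≤ M := (abs_nonneg _).trans (hM 0)
  have hint := abs_integral_deriv_signedRpow_mul_le (sub_pos.2 hp) pi_pos.le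
    (f := fun w ↦ G (x + w)) fun w _ ↦ hM (x + w)
  have hboundary : |π ^ (p - 1) * (G (x + π) + G (x - π))| ≤ π ^ (p - 1) * (M + M) := by
    rw [abs_mul, abs_of_nonneg (by positivity)]
    gcongr
    exact (abs_add_le _ _).trans (add_le_add (hM _) (hM _))
  rw [linePotentialDeriv₂, abs_mul, abs_mul, abs_of_pos (by positivity : 0 < (2 * π)⁻¹),
    abs_of_pos (by linarith : 0 < p), inv_mul_le_iff₀ (by positivity)]
  calc _ ≤ p * (2 * π ^ (p - 1) * M + π ^ (p - 1) * (M + M)) := by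
        gcongr
        exact (abs_sub _ _).trans (add_le_add hint hboundary)
    _ = 2 * 2 * (p * π ^ (p - 1) * M) := by ring
    _ ≤ 2 * π * (p * π ^ (p - 1) * M) := by gcongr; exact two_le_pi

end LinePotential

/-- The image of `𝟙` under the adjoint, with respect to the density `exp (-β V)`, of the
(unnormalized) jump operator `φ ↦ ∫ (φ (x + s w) - φ x) G (x + w) dw`. -/
def jumpAdjointOne (V G s : ℝ → ℝ) (β x : ℝ) : ℝ :=
  ∫ w in (-π)..π, (exp (-β * (V (x - s w) - V x)) * G (x + w - s w) - G (x + w))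

/-- The lift to the line of `L*_{α,β}𝟙`: the first summand is the adjoint of the diffusion, the
second that of the jumps. -/
def adjointOne (p : ℝ) (G : ℝ → ℝ) (α β x : ℝ) : ℝ :=
  1 / 2 * (β ^ 2 * linePotentialDeriv p G x ^ 2 - β * linePotentialDeriv₂ p G x)
    + α⁻¹ * ((2 * π)⁻¹ * jumpAdjointOne (linePotential p G) G
        (fun w ↦ p / 2 * α * β * signedRpow (p - 1) w) β x)

section AdjointOne

variable {V V' V'' G s : ℝ → ℝ} {p q e L M A a α β : ℝ}

lemma continuous_jumpAdjointOne (hV : Continuous V) (hG : Continuous G) (hs : Continuous s)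
    (β : ℝ) : Continuous (jumpAdjointOne V G s β) :=
  intervalIntegral.continuous_parametric_intervalIntegral_of_continuous' (by fun_prop) _ _

lemma jumpAdjointOne_eq (hV : Continuous V) (hG : Continuous G) (hs : Continuous s) (β v x : ℝ) :
    jumpAdjointOne V G s β x
      = (∫ w in (-π)..π, (G (x + w - s w) - G (x + w)))
        + β * v * (∫ w in (-π)..π, s w * G (x + w))
        + β * v * (∫ w in (-π)..π, s w * (G (x + w - s w) - G (x + w)))
        + ∫ w in (-π)..π,
            (exp (-β * (V (x - s w) - V x)) - 1 - β * s w * v) * G (x + w - s w) := by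
  simp only [← intervalIntegral.integral_const_mul]
  iterate 3 rw [← intervalIntegral.integral_add
    (Continuous.intervalIntegrable (by fun_prop) _ _)
    (Continuous.intervalIntegrable (by fun_prop) _ _)]
  refine intervalIntegral.integral_congr fun w _ ↦ ?_
  ring

lemma abs_jumpAdjointOne_sub_linear_le (hV : ∀ x, HasDerivAt V (V' x) x)
    (hV' : ∀ x, HasDerivAt V' (V'' x) x) (hL : ∀ x, |V' x| ≤ L) (hL' : ∀ x, |V'' x| ≤ L)
    (hG : Continuous G) (hM : ∀ x, |G x| ≤ M) (hA : 0 ≤ A) (ha : 0 ≤ a)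
    (hGA : ∀ x y, |G x - G y| ≤ A * |x - y| ^ a) (hq : 0 < q) (he : 0 ≤ e) (hβ : 0 ≤ β)
    (hsmall : β * L * (e * π ^ q) ≤ 1) (x : ℝ) :
    |jumpAdjointOne V G (fun w ↦ e * signedRpow q w) β x
        - e * ((∫ w in (-π)..π, q * |w| ^ (q - 1) * G (x + w))
          - π ^ q * (G (x + π) + G (x - π)))
        - β * V' x * (e * ∫ w in (-π)..π, signedRpow q w * G (x + w))|
      ≤ 4 * (A * (e * π ^ q) ^ a * (e * π ^ q)) + 6 * (β * L * M * (e * π ^ q) ^ 2)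
        + 2 * π * (((β * L * (e * π ^ q)) ^ 2 + β * L * (e * π ^ q) ^ 2) * M) := by
  have hVc : Continuous V := continuous_iff_continuousAt.2 fun x ↦ (hV x).continuousAt
  have hL0 : 0 ≤ L := (abs_nonneg _).trans (hL 0)
  have hdensity := abs_integral_comp_add_sub_signedRpow_sub_linear_le hG hA ha hGA hq
    pi_pos.le he x
  have hcross := abs_integral_signedRpow_mul_comp_add_sub_signedRpow_sub_le hG hM hq
    pi_pos.le he x
  have hremainder := abs_integral_le_of_abs_le_const (R := π)
    (f := fun w ↦ (exp (-β * (V (x - e * signedRpow q w) - V x)) - 1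
      - β * (e * signedRpow q w) * V' x) * G (x + w - e * signedRpow q w))
    (c := ((β * L * (e * π ^ q)) ^ 2 + β * L * (e * π ^ q) ^ 2) * M) pi_pos.le fun w hw ↦ by
      have hw' := abs_mul_signedRpow_le hq he hw
      have hstep : β * L * |e * signedRpow q w| ≤ β * L * (e * π ^ q) := by gcongr
      rw [abs_mul]
      refine mul_le_mul ((abs_exp_neg_mul_increment_sub_linear_le hV hV' hL hL' hβ
        (hstep.trans hsmall)).trans ?_) (hM _) (abs_nonneg _) (by positivity)
      rw [← sq_abs (e * signedRpow q w)]
      gcongr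
  have hcross' : |β * V' x * (e * ∫ w in (-π)..π,
      signedRpow q w * (G (x + w - e * signedRpow q w) - G (x + w)))|
      ≤ 6 * (β * L * M * (e * π ^ q) ^ 2) := by
    rw [abs_mul, abs_mul, abs_mul, abs_of_nonneg hβ, abs_of_nonneg he]
    calc _ ≤ β * L * (e * (6 * M * e * (π ^ q) ^ 2)) := by gcongr; exact hL x
      _ = _ := by ring
  rw [jumpAdjointOne_eq hVc hG ((continuous_signedRpow hq).const_mul e) β (V' x)]
  simp only [mul_assoc e, intervalIntegral.integral_const_mul]
  rw [abs_le] at hdensity hcross' hremainder ⊢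
  constructor <;> linarith

lemma continuous_adjointOne (hp : 1 < p) (hG : Continuous G)
    (hper : Function.Periodic G (2 * π)) (α β : ℝ) : Continuous (adjointOne p G α β) := by
  have hV := continuous_linePotential hG hper hp
  have hV' := continuous_linePotentialDeriv hG hp
  have hV'' := continuous_linePotentialDeriv₂ hG hp
  have hJ := continuous_jumpAdjointOne hV hG
    ((continuous_signedRpow (sub_pos.2 hp)).const_mul (p / 2 * α * β)) β
  unfold adjointOne
  fun_prop

-- To first order in the jumps, the jump part cancels the diffusion part.
lemma adjointOne_eq (hα : α ≠ 0) (β x : ℝ) :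
    adjointOne p G α β x
      = (2 * π * α)⁻¹ * (jumpAdjointOne (linePotential p G) G
            (fun w ↦ p / 2 * α * β * signedRpow (p - 1) w) β x
          - p / 2 * α * β * ((∫ w in (-π)..π, (p - 1) * |w| ^ (p - 1 - 1) * G (x + w))
            - π ^ (p - 1) * (G (x + π) + G (x - π)))
          - β * linePotentialDeriv p G x
            * (p / 2 * α * β * ∫ w in (-π)..π, signedRpow (p - 1) w * G (x + w))) := by
  have hV' : p * (∫ w in (-π)..π, signedRpow (p - 1) w * G (x + w))
      = -(2 * π) * linePotentialDeriv p G x := by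
    rw [linePotentialDeriv]; field_simp
  have hV'' : p * ((∫ w in (-π)..π, (p - 1) * |w| ^ (p - 1 - 1) * G (x + w))
      - π ^ (p - 1) * (G (x + π) + G (x - π))) = 2 * π * linePotentialDeriv₂ p G x := by
    rw [linePotentialDeriv₂]; field_simp
  rw [adjointOne]
  field_simp
  linear_combination α * β * hV'' + α * β ^ 2 * linePotentialDeriv p G x * hV'

lemma abs_adjointOne_le {δ : ℝ} (hp : 1 < p) (hG : Continuous G)
    (hper : Function.Periodic G (2 * π)) (hM : ∀ x, |G x| ≤ M) (hA : 0 ≤ A) (ha : 0 ≤ a)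
    (hGA : ∀ x y, |G x - G y| ≤ A * |x - y| ^ a) (hα : 0 < α) (hβ : 1 ≤ β)
    (hδ : δ = p / 2 * α * β * π ^ (p - 1)) (hsmall : β * (p * π ^ (p - 1) * M) * δ ≤ 1) (x : ℝ) :
    |adjointOne p G α β x|
      ≤ α⁻¹ * (A * δ ^ a * δ + (2 * (p * π ^ (p - 1)) * M ^ 2
          + (p * π ^ (p - 1)) ^ 2 * M ^ 3) * (β * δ) ^ 2) := by
  set B := p * π ^ (p - 1)
  have hM0 : 0 ≤ M := (abs_nonneg _).trans (hM 0)
  have hδ0 : 0 ≤ δ := by rw [hδ]; positivity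
  have hβδ : β * δ ^ 2 ≤ (β * δ) ^ 2 := by
    rw [mul_pow]; gcongr; exact le_self_pow₀ hβ two_ne_zero
  have hjump := abs_jumpAdjointOne_sub_linear_le (β := β) (hasDerivAt_linePotential hG hper hp)
    (hasDerivAt_linePotentialDeriv hG hp) (abs_linePotentialDeriv_le hp hM)
    (abs_linePotentialDeriv₂_le hp hM) hG hM hA ha hGA (sub_pos.2 hp)
    (by positivity : 0 ≤ p / 2 * α * β) (by linarith) (by rwa [← hδ]) x
  rw [← hδ] at hjump
  rw [adjointOne_eq hα.ne', abs_mul, abs_of_pos (by positivity), mul_inv_rev, mul_assoc]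
  gcongr
  rw [inv_mul_le_iff₀ (by positivity)]
  calc _ ≤ 4 * (A * δ ^ a * δ) + 6 * (β * (B * M) * M * δ ^ 2)
        + 2 * π * (((β * (B * M) * δ) ^ 2 + β * (B * M) * δ ^ 2) * M) := hjump
    _ ≤ 2 * π * (A * δ ^ a * δ) + 2 * π * (β * (B * M) * M * δ ^ 2)
        + 2 * π * (((β * (B * M) * δ) ^ 2 + β * (B * M) * δ ^ 2) * M) := by
      gcongr <;> linarith [pi_gt_three]
    _ = 2 * π * (A * δ ^ a * δ + 2 * B * M ^ 2 * (β * δ ^ 2) + B ^ 2 * M ^ 3 * (β * δ) ^ 2) := by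
      ring
    _ ≤ 2 * π * (A * δ ^ a * δ + 2 * B * M ^ 2 * (β * δ) ^ 2 + B ^ 2 * M ^ 3 * (β * δ) ^ 2) := by
      gcongr
    _ = _ := by ring

lemma abs_adjointOne_le_max (hp : 1 < p) (hG : Continuous G)
    (hper : Function.Periodic G (2 * π)) (hM : ∀ x, |G x| ≤ M) (hA : 0 ≤ A) (ha : 0 ≤ a)
    (ha1 : a ≤ 1) (hGA : ∀ x y, |G x - G y| ≤ A * |x - y| ^ a) (hα : 0 < α) (hβ : 1 ≤ β)
    (hsmall : (p * π ^ (p - 1)) ^ 2 * M * α * β ^ 2 ≤ 2) (x : ℝ) :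
    |adjointOne p G α β x|
      ≤ (p * π ^ (p - 1)) ^ 2 * (A + 2 * (p * π ^ (p - 1)) * M ^ 2
          + (p * π ^ (p - 1)) ^ 2 * M ^ 3) * max (α * β ^ 4) (α ^ a * β ^ (1 + a)) := by
  have hbound := abs_adjointOne_le hp hG hper hM hA ha hGA hα hβ rfl
    (by linarith) x
  have hB : 1 ≤ p * π ^ (p - 1) := one_le_mul_of_one_le_of_one_le hp.le
    (one_le_rpow (by linarith [pi_gt_three]) (sub_pos.2 hp).le)
  have hδ : p / 2 * α * β * π ^ (p - 1) = p * π ^ (p - 1) / 2 * (α * β) := by ring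
  rw [hδ] at hbound
  set B := p * π ^ (p - 1)
  have hM0 : 0 ≤ M := (abs_nonneg _).trans (hM 0)
  have hβ0 : 0 < β := one_pos.trans_le hβ
  have hpow : (B / 2) ^ a ≤ B := calc
    (B / 2) ^ a ≤ B ^ a := by gcongr; linarith
    _ ≤ B := by simpa using rpow_le_rpow_of_exponent_le hB ha1
  calc |adjointOne p G α β x|
      ≤ α⁻¹ * (A * (B / 2 * (α * β)) ^ a * (B / 2 * (α * β))
          + (2 * B * M ^ 2 + B ^ 2 * M ^ 3) * (β * (B / 2 * (α * β))) ^ 2) := hbound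
    _ = A * ((B / 2) ^ a * (B / 2)) * (α ^ a * β ^ (1 + a))
          + (2 * B * M ^ 2 + B ^ 2 * M ^ 3) * (B / 2) ^ 2 * (α * β ^ 4) := by
      rw [mul_rpow (by positivity) (by positivity), mul_rpow hα.le hβ0.le, rpow_one_add' hβ0.le
        (by positivity)]
      field_simp
    _ ≤ A * (B * B) * max (α * β ^ 4) (α ^ a * β ^ (1 + a))
          + (2 * B * M ^ 2 + B ^ 2 * M ^ 3) * B ^ 2 * max (α * β ^ 4) (α ^ a * β ^ (1 + a)) := by
      gcongr <;> first | exact le_max_left _ _ | exact le_max_right _ _ | linarith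
    _ = _ := by ring

end AdjointOne

section PeriodicDuality

lemma intervalIntegral_comp_add_right_of_periodic {f : ℝ → ℝ} {R : ℝ}
    (hf : Function.Periodic f (2 * R)) (t : ℝ) :
    ∫ x in (-R)..R, f (x + t) = ∫ x in (-R)..R, f x := by
  have h := hf.intervalIntegral_add_eq (-R + t) (-R)
  rw [intervalIntegral.integral_comp_add_right]
  convert h using 2 <;> ring

lemma integral_mul_deriv_of_periodic {u u' v v' : ℝ → ℝ} {R : ℝ}
    (hu : ∀ x, HasDerivAt u (u' x) x) (hv : ∀ x, HasDerivAt v (v' x) x)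
    (hu' : Continuous u') (hv' : Continuous v') (hu_per : Function.Periodic u (2 * R))
    (hv_per : Function.Periodic v (2 * R)) :
    ∫ x in (-R)..R, u x * v' x = -∫ x in (-R)..R, u' x * v x := by
  have hends : ∀ f : ℝ → ℝ, Function.Periodic f (2 * R) → f R = f (-R) := fun f hf ↦ by
    rw [← hf (-R)]; ring_nf
  rw [intervalIntegral.integral_mul_deriv_eq_deriv_mul (fun x _ ↦ hu x) (fun x _ ↦ hv x)
    (hu'.intervalIntegrable _ _) (hv'.intervalIntegrable _ _), hends u hu_per, hends v hv_per,
    sub_self, zero_sub]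

lemma periodic_deriv {f : ℝ → ℝ} {T : ℝ} (hf : Function.Periodic f T) :
    Function.Periodic (deriv f) T := fun x ↦ by
  rw [← deriv_comp_add_const, hf.funext]

lemma intervalIntegral_swap_of_continuous {f : ℝ → ℝ → ℝ} (hf : Continuous (Function.uncurry f))
    (a b c d : ℝ) :
    ∫ x in a..b, ∫ y in c..d, f x y = ∫ y in c..d, ∫ x in a..b, f x y :=
  intervalIntegral_intervalIntegral_swap ((hf.continuousOn.integrableOn_compact
    (isCompact_uIcc.prod isCompact_uIcc)).mono_set (prod_mono uIoc_subset_uIcc uIoc_subset_uIcc))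

variable {V V' V'' G s φ : ℝ → ℝ}

lemma integral_exp_neg_mul_deriv_deriv {R : ℝ} (hV : ∀ x, HasDerivAt V (V' x) x)
    (hV' : ∀ x, HasDerivAt V' (V'' x) x) (hV'' : Continuous V'')
    (hV_per : Function.Periodic V (2 * R)) (hV'_per : Function.Periodic V' (2 * R))
    (hφ_per : Function.Periodic φ (2 * R)) (hφ : ContDiff ℝ 2 φ) (β : ℝ) :
    ∫ x in (-R)..R, exp (-β * V x) * deriv (deriv φ) x
      = ∫ x in (-R)..R, exp (-β * V x) * (φ x * (β ^ 2 * V' x ^ 2 - β * V'' x)) := by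
  have hVc : Continuous V := continuous_iff_continuousAt.2 fun x ↦ (hV x).continuousAt
  have hVc' : Continuous V' := continuous_iff_continuousAt.2 fun x ↦ (hV' x).continuousAt
  have hφ' : ContDiff ℝ 1 (deriv φ) := hφ.deriv'
  have hexp : ∀ x, HasDerivAt (fun x ↦ exp (-β * V x)) (-β * V' x * exp (-β * V x)) x := fun x ↦
    ((hV x).const_mul (-β)).exp.congr_deriv (by ring)
  have hexp' : ∀ x, HasDerivAt (fun x ↦ -β * V' x * exp (-β * V x))
      ((β ^ 2 * V' x ^ 2 - β * V'' x) * exp (-β * V x)) x := fun x ↦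
    (((hV' x).const_mul (-β)).mul (hexp x)).congr_deriv (by ring)
  have hexp_per : Function.Periodic (fun x ↦ exp (-β * V x)) (2 * R) := fun x ↦ by
    simp only [hV_per x]
  rw [integral_mul_deriv_of_periodic hexp
      (fun x ↦ (hφ'.differentiable one_ne_zero x).hasDerivAt) (by fun_prop)
      (hφ'.continuous_deriv le_rfl) hexp_per (periodic_deriv hφ_per),
    integral_mul_deriv_of_periodic hexp'
      (fun x ↦ (hφ.differentiable two_ne_zero x).hasDerivAt) (by fun_prop) hφ'.continuous
      (fun x ↦ by simp only [hV_per x, hV'_per x]) hφ_per, neg_neg]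
  exact intervalIntegral.integral_congr fun x _ ↦ by ring

lemma integral_mul_sub_mul_comp_add {u : ℝ → ℝ} {R : ℝ} (hu : Continuous u) (hφ : Continuous φ)
    (hG : Continuous G) (hu_per : Function.Periodic u (2 * R))
    (hφ_per : Function.Periodic φ (2 * R)) (hG_per : Function.Periodic G (2 * R)) (t w : ℝ) :
    ∫ x in (-R)..R, u x * ((φ (x + t) - φ x) * G (x + w))
      = ∫ x in (-R)..R, φ x * (u (x - t) * G (x + w - t) - u x * G (x + w)) := by
  have hshift := intervalIntegral_comp_add_right_of_periodic (R := R)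
    (f := fun x ↦ φ x * (u (x - t) * G (x + w - t))) (fun x ↦ by
      simp only [add_right_comm x (2 * R), add_sub_right_comm _ (2 * R), hu_per _, hφ_per _,
        hG_per _]) t
  simp only [add_sub_cancel_right, add_right_comm _ t] at hshift
  simp only [mul_sub, sub_mul]
  rw [intervalIntegral.integral_sub (Continuous.intervalIntegrable (by fun_prop) _ _)
      (Continuous.intervalIntegrable (by fun_prop) _ _),
    intervalIntegral.integral_sub (Continuous.intervalIntegrable (by fun_prop) _ _)
      (Continuous.intervalIntegrable (by fun_prop) _ _), ← hshift]
  congr 1 <;> exact intervalIntegral.integral_congr fun x _ ↦ by ring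

lemma integral_exp_neg_mul_jump (hV : Continuous V) (hG : Continuous G) (hs : Continuous s)
    (hφ : Continuous φ) (hV_per : Function.Periodic V (2 * π))
    (hG_per : Function.Periodic G (2 * π)) (hφ_per : Function.Periodic φ (2 * π)) (β : ℝ) :
    ∫ x in (-π)..π, exp (-β * V x) * ∫ w in (-π)..π, (φ (x + s w) - φ x) * G (x + w)
      = ∫ x in (-π)..π, exp (-β * V x) * (φ x * jumpAdjointOne V G s β x) := by
  have hexp : ∀ x t, exp (-β * V (x - t)) = exp (-β * V x) * exp (-β * (V (x - t) - V x)) :=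
    fun x t ↦ by rw [← exp_add]; ring_nf
  simp only [jumpAdjointOne, ← intervalIntegral.integral_const_mul]
  refine (intervalIntegral_swap_of_continuous (by fun_prop) _ _ _ _).trans (Eq.trans ?_
    (intervalIntegral_swap_of_continuous (by fun_prop) _ _ _ _).symm)
  refine intervalIntegral.integral_congr fun w _ ↦ ?_
  rw [integral_mul_sub_mul_comp_add (by fun_prop) hφ hG (fun x ↦ by simp only [hV_per x])
    hφ_per hG_per]
  refine intervalIntegral.integral_congr fun x _ ↦ ?_
  simp only [hexp]
  ring

lemma integral_exp_neg_linePotential_mul_generator {p : ℝ} (hp : 1 < p) (hG : Continuous G)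
    (hG_per : Function.Periodic G (2 * π)) (hφ_per : Function.Periodic φ (2 * π))
    (hφ : ContDiff ℝ 2 φ) (α β : ℝ) :
    ∫ x in (-π)..π, exp (-β * linePotential p G x) * (1 / 2 * deriv (deriv φ) x
        + α⁻¹ * ((2 * π)⁻¹ * ∫ w in (-π)..π,
          (φ (x + p / 2 * α * β * signedRpow (p - 1) w) - φ x) * G (x + w)))
      = ∫ x in (-π)..π, exp (-β * linePotential p G x) * (φ x * adjointOne p G α β x) := by
  have hV := continuous_linePotential hG hG_per hp
  have hV' := continuous_linePotentialDeriv hG hp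
  have hV'' := continuous_linePotentialDeriv₂ hG hp
  have hs := continuous_signedRpow (sub_pos.2 hp)
  have hes := hs.const_mul (p / 2 * α * β)
  have hφc := hφ.continuous
  have hφ'' : Continuous (deriv (deriv φ)) := hφ.deriv'.continuous_deriv le_rfl
  have hJ := continuous_jumpAdjointOne hV hG hes β
  have hjump : Continuous fun x ↦ ∫ w in (-π)..π,
      (φ (x + p / 2 * α * β * signedRpow (p - 1) w) - φ x) * G (x + w) :=
    intervalIntegral.continuous_parametric_intervalIntegral_of_continuous' (by fun_prop) _ _
  have hlinear : ∀ f g : ℝ → ℝ, Continuous f → Continuous g →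
      ∫ x in (-π)..π, exp (-β * linePotential p G x) * (1 / 2 * f x + α⁻¹ * ((2 * π)⁻¹ * g x))
        = 1 / 2 * (∫ x in (-π)..π, exp (-β * linePotential p G x) * f x)
          + α⁻¹ * ((2 * π)⁻¹ * ∫ x in (-π)..π, exp (-β * linePotential p G x) * g x) :=
    fun f g hf hg ↦ by
      simp only [← intervalIntegral.integral_const_mul]
      rw [← intervalIntegral.integral_add (Continuous.intervalIntegrable (by fun_prop) _ _)
        (Continuous.intervalIntegrable (by fun_prop) _ _)]
      exact intervalIntegral.integral_congr fun x _ ↦ by ring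
  have hadjoint : ∀ x, φ x * adjointOne p G α β x = _ := fun x ↦ by
    rw [adjointOne, mul_add, mul_left_comm, mul_left_comm (φ x) α⁻¹,
      mul_left_comm (φ x) (2 * π)⁻¹]
  simp only [hadjoint]
  rw [hlinear _ _ hφ'' hjump, hlinear _ _ (by fun_prop) (by fun_prop),
    integral_exp_neg_mul_deriv_deriv (hasDerivAt_linePotential hG hG_per hp)
      (hasDerivAt_linePotentialDeriv hG hp) hV'' (periodic_linePotential hG_per p)
      (periodic_linePotentialDeriv hG_per p) hφ_per hφ,
    integral_exp_neg_mul_jump hV hG hes hφc (periodic_linePotential hG_per p) hG_per hφ_per]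

end PeriodicDuality

section Circle

lemma integral_lam (f : 𝕋 → ℝ) (x : ℝ) :
    ∫ z, f z ∂lam = (2 * π)⁻¹ * ∫ w in (-π)..π, f ((x + w : ℝ) : 𝕋) := by
  have h := AddCircle.intervalIntegral_preimage (2 * π) (x + -π) f
  rw [intervalIntegral.integral_comp_add_left (fun y : ℝ ↦ f (y : 𝕋)) x, lam,
    integral_smul_measure, ENNReal.toReal_inv, ENNReal.toReal_ofReal two_pi_pos.le, smul_eq_mul,
    ← h]
  ring_nf

lemma rep_coe {w : ℝ} (hw : w ∈ Ioc (-π) π) : rep (w : 𝕋) = w := by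
  rw [rep, AddCircle.equivIoc_coe_eq ⟨hw.1, by linarith [hw.2]⟩]

lemma coe_rep (z : 𝕋) : (rep z : 𝕋) = z := AddCircle.coe_equivIoc

lemma measurable_rep : Measurable rep :=
  measurable_subtype_coe.comp (AddCircle.measurableEquivIoc (2 * π) (-π)).measurable

lemma dist_coe_le (x y : ℝ) : dist (x : 𝕋) (y : 𝕋) ≤ |x - y| := by
  rw [dist_eq_norm, ← AddCircle.coe_sub]
  exact QuotientAddGroup.norm_mk_le_norm

lemma dist_coe_coe_add (x : ℝ) {w : ℝ} (hw : w ∈ Icc (-π) π) :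
    dist (x : 𝕋) ((x + w : ℝ) : 𝕋) = |w| := by
  rw [dist_comm, dist_eq_norm, ← AddCircle.coe_sub, add_sub_cancel_left,
    AddCircle.norm_coe_eq_abs_iff _ two_pi_pos.ne', abs_of_pos two_pi_pos,
    mul_div_cancel_left₀ _ two_ne_zero]
  exact abs_le.2 hw

lemma dist_rpow_mul_sgn {q : ℝ} (hq : q ≠ 0) (x : ℝ) {w : ℝ} (hw : w ∈ Ioc (-π) π) :
    dist (x : 𝕋) ((x + w : ℝ) : 𝕋) ^ q * sgn x ((x + w : ℝ) : 𝕋) = signedRpow q w := by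
  rw [dist_coe_coe_add x (Ioc_subset_Icc_self hw), sgn, ← AddCircle.coe_sub, add_sub_cancel_left,
    rep_coe hw, ← abs_signedRpow hq]
  split_ifs with h
  · rw [mul_one, abs_of_nonneg]
    exact mul_nonneg (by positivity) h
  · rw [mul_neg_one, abs_of_nonpos, neg_neg]
    exact mul_nonpos_of_nonneg_of_nonpos (by positivity) (not_le.1 h).le

lemma continuous_of_holder {X : Type*} [PseudoMetricSpace X] {g : X → ℝ} {A a : ℝ} (ha : 0 < a)
    (hg : ∀ x y, |g x - g y| ≤ A * dist x y ^ a) : Continuous g := by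
  refine continuous_iff_continuousAt.2 fun x ↦ tendsto_iff_dist_tendsto_zero.2 ?_
  have hbound : Continuous fun y ↦ A * dist y x ^ a :=
    continuous_const.mul ((continuous_id.dist continuous_const).rpow_const fun _ ↦ .inr ha.le)
  exact squeeze_zero (fun _ ↦ dist_nonneg) (fun y ↦ hg y x)
    (by simpa [zero_rpow ha.ne'] using hbound.tendsto x)

variable {g : 𝕋 → ℝ} {p A a : ℝ}

lemma continuous_lift (hg : Continuous g) : Continuous fun t : ℝ ↦ g t :=
  hg.comp (AddCircle.continuous_mk' _)

lemma periodic_lift (g : 𝕋 → ℝ) : Function.Periodic (fun t : ℝ ↦ g t) (2 * π) := fun t ↦ by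
  simp only [AddCircle.coe_add_period]

lemma abs_lift_sub_le (hA : 0 ≤ A) (ha : 0 ≤ a) (hgA : ∀ x y : 𝕋, |g x - g y| ≤ A * dist x y ^ a)
    (x y : ℝ) : |g x - g y| ≤ A * |x - y| ^ a :=
  (hgA x y).trans (by gcongr; exact dist_coe_le x y)

lemma integral_lam_withDensity (hg : Measurable g) (hg0 : ∀ z, 0 ≤ g z) (f : 𝕋 → ℝ) (x : ℝ) :
    ∫ z, f z ∂(lam.withDensity fun y ↦ ENNReal.ofReal (g y))
      = (2 * π)⁻¹ * ∫ w in (-π)..π, f ((x + w : ℝ) : 𝕋) * g ((x + w : ℝ) : 𝕋) := by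
  rw [integral_withDensity_eq_integral_toReal_smul hg.ennreal_ofReal (by simp), integral_lam _ x]
  simp only [ENNReal.toReal_ofReal (hg0 _), smul_eq_mul, mul_comm]

lemma density_le (hA : 0 ≤ A) (ha : 0 < a) (ha1 : a ≤ 1) (hg0 : ∀ z, 0 ≤ g z)
    (hgA : ∀ x y : 𝕋, |g x - g y| ≤ A * dist x y ^ a)
    [IsProbabilityMeasure (lam.withDensity fun y ↦ ENNReal.ofReal (g y))] (x : ℝ) :
    g x ≤ 1 + A * π := by
  have hg := continuous_of_holder ha hgA
  have hg_add : Continuous fun w : ℝ ↦ g ((x + w : ℝ) : 𝕋) :=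
    (continuous_lift hg).comp (continuous_const_add x)
  have hmean : ∫ w in (-π)..π, g ((x + w : ℝ) : 𝕋) = 2 * π := by
    have h := integral_lam_withDensity hg.measurable hg0 1 x
    simp only [Pi.one_apply, integral_const, probReal_univ, smul_eq_mul, mul_one, one_mul] at h
    rw [eq_comm, inv_mul_eq_one₀ two_pi_pos.ne'] at h
    exact h.symm
  have hosc : ∀ w ∈ Icc (-π) π, g x - A * π ≤ g ((x + w : ℝ) : 𝕋) := fun w hw ↦ by
    have hpow : |w| ^ a ≤ π := calc
      |w| ^ a ≤ π ^ a := rpow_le_rpow (abs_nonneg w) (abs_le.2 hw) ha.le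
      _ ≤ π := by simpa using rpow_le_rpow_of_exponent_le (by linarith [pi_gt_three]) ha1
    have h := hgA x ((x + w : ℝ) : 𝕋)
    rw [dist_coe_coe_add x hw] at h
    linarith [le_of_abs_le h, mul_le_mul_of_nonneg_left hpow hA]
  have hint := intervalIntegral.integral_mono_on (μ := volume) (by linarith [pi_pos])
    intervalIntegrable_const (hg_add.intervalIntegrable _ _) hosc
  rw [hmean, intervalIntegral.integral_const, sub_neg_eq_add, ← two_mul, smul_eq_mul,
    mul_le_iff_le_one_right two_pi_pos] at hint
  linarith

lemma Up_coe (hg : Measurable g) (hg0 : ∀ z, 0 ≤ g z) (p x : ℝ) :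
    Up p (lam.withDensity fun y ↦ ENNReal.ofReal (g y)) x
      = linePotential p (fun t : ℝ ↦ g t) x := by
  rw [Up, linePotential, integral_lam_withDensity hg hg0 _ x]
  congr 1
  refine intervalIntegral.integral_congr fun w hw ↦ ?_
  rw [uIcc_of_le (by linarith [pi_pos])] at hw
  simp only [dist_coe_coe_add x hw]

lemma integral_gibbsp (hp : 1 < p) (hg : Continuous g) (hg0 : ∀ z, 0 ≤ g z) (β : ℝ)
    (f : 𝕋 → ℝ) :
    ∫ z, f z ∂(gibbsp p (lam.withDensity fun y ↦ ENNReal.ofReal (g y)) β)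
      = (2 * π)⁻¹ * ∫ x in (-π)..π,
          exp (-β * linePotential p (fun t : ℝ ↦ g t) x)
            / Zp p (lam.withDensity fun y ↦ ENNReal.ofReal (g y)) β * f x := by
  set ν := lam.withDensity fun y ↦ ENNReal.ofReal (g y)
  have hU : Up p ν = linePotential p (fun t : ℝ ↦ g t) ∘ rep := funext fun z ↦ by
    rw [Function.comp_apply, ← Up_coe hg.measurable hg0, coe_rep]
  have hUm : Measurable (Up p ν) := hU ▸
    (continuous_linePotential (continuous_lift hg) (periodic_lift g) hp).measurable.comp
      measurable_rep
  have hZ : 0 ≤ Zp p ν β := integral_nonneg fun _ ↦ (exp_pos _).le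
  rw [gibbsp, integral_withDensity_eq_integral_toReal_smul
    ((hUm.const_mul (-β)).exp.div_const _).ennreal_ofReal (by simp), integral_lam _ 0]
  congr 3 with x
  rw [ENNReal.toReal_ofReal (by positivity), zero_add, Up_coe hg.measurable hg0, smul_eq_mul]

lemma genp_coe (hp : p ≠ 1) (hg : Measurable g) (hg0 : ∀ z, 0 ≤ g z) (α β : ℝ) (φ : ℝ → ℝ)
    {x : ℝ} (hx : x ∈ Ioc (-π) π) :
    genp p (lam.withDensity fun y ↦ ENNReal.ofReal (g y)) α β φ x
      = 1 / 2 * deriv (deriv φ) x + α⁻¹ * ((2 * π)⁻¹ * ∫ w in (-π)..π,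
          (φ (x + p / 2 * α * β * signedRpow (p - 1) w) - φ x) * g ((x + w : ℝ) : 𝕋)) := by
  rw [genp, integral_lam_withDensity hg hg0 _ x, rep_coe hx]
  congr 3
  refine intervalIntegral.integral_congr_uIoo fun w hw ↦ ?_
  rw [uIoo_of_le (by linarith [pi_pos])] at hw
  rw [mul_assoc (p / 2 * α * β), dist_rpow_mul_sgn (sub_ne_zero.2 hp) x (Ioo_subset_Ioc_self hw)]

lemma integral_genp_gibbsp (hp : 1 < p) (hg : Continuous g) (hg0 : ∀ z, 0 ≤ g z) (α β : ℝ)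
    {φ : ℝ → ℝ} (hφ_per : Function.Periodic φ (2 * π)) (hφ : ContDiff ℝ 2 φ) :
    ∫ z, genp p (lam.withDensity fun y ↦ ENNReal.ofReal (g y)) α β φ z
        ∂(gibbsp p (lam.withDensity fun y ↦ ENNReal.ofReal (g y)) β)
      = ∫ z, φ (rep z) * adjointOne p (fun t : ℝ ↦ g t) α β (rep z)
        ∂(gibbsp p (lam.withDensity fun y ↦ ENNReal.ofReal (g y)) β) := by
  rw [integral_gibbsp hp hg hg0, integral_gibbsp hp hg hg0]
  simp only [div_mul_eq_mul_div, intervalIntegral.integral_div]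
  congr 2
  have hline : ∀ f f' : ℝ → ℝ, EqOn f f' (Ioc (-π) π) →
      ∫ x in (-π)..π, f x = ∫ x in (-π)..π, f' x := fun f f' h ↦
    intervalIntegral.integral_congr_uIoo fun x hx ↦
      h (Ioo_subset_Ioc_self (by rwa [uIoo_of_le (by linarith [pi_pos])] at hx))
  refine (hline _ _ fun x hx ↦ ?_).trans ((integral_exp_neg_linePotential_mul_generator hp
    (continuous_lift hg) (periodic_lift g) hφ_per hφ α β).trans (hline _ _ fun x hx ↦ ?_))
  · simp only [genp_coe hp.ne' hg.measurable hg0 α β φ hx]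
  · simp only [rep_coe hx]

end Circle

theorem adjoint_one_estimate_p_between_one_two_general
    (p : ℝ) (hp : 1 < p) (A : ℝ) (hA : 0 ≤ A) :
    ∃ σ C : ℝ, 0 < σ ∧ σ < 1 / 2 ∧ 0 < C ∧
      ∀ (a : ℝ), 0 < a → a ≤ 1 →
      ∀ (g : 𝕋 → ℝ) (ν : Measure 𝕋), IsProbabilityMeasure ν →
        ν = lam.withDensity (fun y => ENNReal.ofReal (g y)) →
        (∀ x, 0 ≤ g x) →
        (∀ x y : 𝕋, |g x - g y| ≤ A * dist x y ^ a) →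
      ∀ (β α : ℝ), 1 ≤ β → 0 < α → α < σ * β⁻¹ ^ 2 →
      ∃ h : 𝕋 → ℝ, Measurable h ∧
        (∀ z, |h z| ≤ C * max (α * β ^ 4) (α ^ a * β ^ (1 + a))) ∧
        ∀ φ : ℝ → ℝ, Function.Periodic φ (2 * π) → ContDiff ℝ 2 φ →
          ∫ z, genp p ν α β φ z ∂(gibbsp p ν β) = ∫ z, φ (rep z) * h z ∂(gibbsp p ν β) := by
  set B := p * π ^ (p - 1)
  set M := 1 + A * π
  have hB : 0 < B := by positivity
  have hM : 0 < M := by positivity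
  refine ⟨(4 + B ^ 2 * M)⁻¹, B ^ 2 * (A + 2 * B * M ^ 2 + B ^ 2 * M ^ 3), by positivity,
    by rw [inv_lt_comm₀ (by positivity) (by norm_num)]; nlinarith [mul_pos (pow_pos hB 2) hM],
    by positivity, ?_⟩
  rintro a ha ha1 g _ hν rfl hg0 hgA β α hβ hα hαβ
  have hg := continuous_lift (continuous_of_holder ha hgA)
  have hg_le : ∀ x : ℝ, |g x| ≤ M := fun x ↦
    (abs_of_nonneg (hg0 x)).trans_le (density_le hA ha ha1 hg0 hgA x)
  have hsmall : B ^ 2 * M * α * β ^ 2 ≤ 2 := by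
    rw [inv_pow, ← div_eq_mul_inv, lt_div_iff₀ (by positivity), ← one_div,
      lt_div_iff₀ (by positivity)] at hαβ
    have hαβ_pos : 0 < α * β ^ 2 := by positivity
    linarith
  exact ⟨fun z ↦ adjointOne p (fun t : ℝ ↦ g t) α β (rep z),
    (continuous_adjointOne hp hg (periodic_lift g) α β).measurable.comp measurable_rep,
    fun z ↦ abs_adjointOne_le_max hp hg (periodic_lift g) hg_le hA ha.le ha1
      (abs_lift_sub_le hA ha.le hgA) hα hβ hsmall (rep z),
    fun φ hφ_per hφ ↦
      integral_genp_gibbsp hp (continuous_of_holder ha hgA) hg0 α β hφ_per hφ⟩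

/-- Proposition `mbl2`: for `p ∈ (1,2)` and a Hölder density, there are constants
`σ ∈ (0,1/2)` and `C`, depending only on `p` and `A`, such that for `β ≥ 1` and
`0 < α < σβ⁻²` the adjoint of `L_{α,β}` in `L²(μ_β)` applied to `𝟙` (i.e. the function `h`
representing `φ ↦ ∫ L_{α,β}φ dμ_β`) satisfies
`ess sup |h| ≤ C max(αβ⁴, α^{p-1}β^{1+p}, α^a β^{1+a})`. -/
theorem adjoint_one_estimate_p_between_one_two
    (p : ℝ) (hp1 : 1 < p) (hp2 : p < 2) (A : ℝ) (hA : 0 < A) :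
    ∃ σ C : ℝ, 0 < σ ∧ σ < 1 / 2 ∧ 0 < C ∧
      ∀ (a : ℝ), 0 < a → a ≤ 1 →
      ∀ (g : 𝕋 → ℝ) (ν : Measure 𝕋), IsProbabilityMeasure ν →
        ν = lam.withDensity (fun y => ENNReal.ofReal (g y)) →
        (∀ x, 0 ≤ g x) →
        (∀ x y : 𝕋, |g x - g y| ≤ A * dist x y ^ a) →
      ∀ (β α : ℝ), 1 ≤ β → 0 < α → α < σ * β⁻¹ ^ 2 →
      ∃ h : 𝕋 → ℝ, Measurable h ∧
        (∀ᵐ x ∂lam,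
          |h x| ≤ C * max (α * β ^ 4) (max (α ^ (p - 1) * β ^ (1 + p)) (α ^ a * β ^ (1 + a)))) ∧
        ∀ φ : ℝ → ℝ, Function.Periodic φ (2 * π) → ContDiff ℝ 2 φ →
          ∫ z, genp p ν α β φ z ∂(gibbsp p ν β) = ∫ z, φ (rep z) * h z ∂(gibbsp p ν β) := by
  obtain ⟨σ, C, hσ, hσ_lt, hC, H⟩ :=
    adjoint_one_estimate_p_between_one_two_general p hp1 A hA.le
  refine ⟨σ, C, hσ, hσ_lt, hC, fun a ha ha1 g ν hν hνg hg0 hgA β α hβ hα hαβ ↦ ?_⟩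
  obtain ⟨h, hm, hbound, hdual⟩ := H a ha ha1 g ν hν hνg hg0 hgA β α hβ hα hαβ
  exact ⟨h, hm, .of_forall fun z ↦ (hbound z).trans (by gcongr; exact le_max_right _ _), hdual⟩
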